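/- ψ(3/10) = −γ − ln 20 − (√(10 − 2√5)/(1 + √5))·(π/2) + (1/2)·(√5·ln(2 + √5) − ln √5), where ψ is the digamma function and γ is the Euler–Mascheroni constant. -/

import Mathlib

noncomputable def digamma (x : ℝ) : ℝ := deriv Real.Gamma x / Real.Gamma x

/-!
Log-convexity of `Γ` squeezes the digamma function between consecutive logarithms, whence
`digamma x - digamma y = ∑ (1 / (y + k) - 1 / (x + k))`. Writing each term as an integral over
`(0, 1)` and summing the geometric series gives Gauss's integral, which for `x = p / q`, `y = 1`
has a rational integrand. Its partial fractions over the `q`-th roots of unity `ζ ^ k` integrate to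
`∑ (ζ ^ (-k p) - 1) log (1 - ζ ^ k)`. The coefficients for `p` and `q - p` are conjugate, so
`digamma (p / q) + digamma (1 - p / q)` is a real combination of the `log (2 sin (π k / q))`, and
the reflection formula supplies the difference of these two values: this is Gauss's digamma
theorem. For `q = 10` every sine and cosine involved lies, up to a square root, in `ℚ(√5)`,
and all logarithms reduce to `log 2`, `log √5` and the logarithm of the golden ratio.
-/

open Filter MeasureTheory Set
open Finset (range)
open scoped Topology Real goldenRatio

section Digamma

variable {x y : ℝ}

theorem digamma_one : digamma 1 = -Real.eulerMascheroniConstant := by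
  rw [digamma, Real.hasDerivAt_Gamma_one.deriv, Real.Gamma_one, div_one]

theorem differentiableAt_Gamma_of_pos (hx : 0 < x) : DifferentiableAt ℝ Real.Gamma x :=
  Real.differentiableOn_Gamma_Ioi.differentiableAt (Ioi_mem_nhds hx)

theorem hasDerivAt_log_comp_Gamma (hx : 0 < x) :
    HasDerivAt (Real.log ∘ Real.Gamma) (digamma x) x :=
  (differentiableAt_Gamma_of_pos hx).hasDerivAt.log (Real.Gamma_pos_of_pos hx).ne'

theorem log_Gamma_add_one (hx : 0 < x) :
    Real.log (Real.Gamma (x + 1)) = Real.log (Real.Gamma x) + Real.log x := by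
  rw [Real.Gamma_add_one hx.ne', Real.log_mul hx.ne' (Real.Gamma_pos_of_pos hx).ne', add_comm]

theorem digamma_add_one (hx : 0 < x) : digamma (x + 1) = digamma x + 1 / x := by
  have h_shift : HasDerivAt (fun y => Real.log (Real.Gamma (y + 1))) (digamma (x + 1)) x :=
    (hasDerivAt_log_comp_Gamma (by positivity)).comp_add_const x 1
  have h_sum : HasDerivAt (fun y => Real.log (Real.Gamma y) + Real.log y) (digamma x + x⁻¹) x :=
    (hasDerivAt_log_comp_Gamma hx).add (Real.hasDerivAt_log hx.ne')
  rw [one_div]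
  exact h_shift.unique <| h_sum.congr_of_eventuallyEq <|
    (eventually_gt_nhds hx).mono fun _ => log_Gamma_add_one

theorem digamma_add_natCast (hx : 0 < x) (n : ℕ) :
    digamma (x + n) = digamma x + ∑ k ∈ range n, 1 / (x + k) := by
  induction n with
  | zero => simp
  | succ n ih =>
    rw [Finset.sum_range_succ, Nat.cast_succ, ← add_assoc, digamma_add_one (by positivity), ih,
      add_assoc]

-- By the functional equation, `log x` is the slope of `log ∘ Γ` on `[x, x + 1]`; convexity of
-- `log ∘ Γ` compares it with the derivatives at the two endpoints.
theorem digamma_le_log (hx : 0 < x) : digamma x ≤ Real.log x := by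
  have h := Real.convexOn_log_Gamma.le_slope_of_hasDerivAt (mem_Ioi.2 hx)
    (mem_Ioi.2 (by positivity : 0 < x + 1)) (by linarith) (hasDerivAt_log_comp_Gamma hx)
  simpa [slope_def_field, log_Gamma_add_one hx] using h

theorem log_le_digamma_add_one (hx : 0 < x) : Real.log x ≤ digamma (x + 1) := by
  have h := Real.convexOn_log_Gamma.slope_le_of_hasDerivAt (mem_Ioi.2 hx)
    (mem_Ioi.2 (by positivity : 0 < x + 1)) (by linarith)
    (hasDerivAt_log_comp_Gamma (by positivity))
  simpa [slope_def_field, log_Gamma_add_one hx] using h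

theorem tendsto_digamma_sub_log_atTop :
    Tendsto (fun x => digamma x - Real.log x) atTop (𝓝 0) := by
  refine tendsto_of_tendsto_of_tendsto_of_le_of_le' (Real.tendsto_log_comp_add_sub_log (-1))
    tendsto_const_nhds ?_ ?_
  · filter_upwards [eventually_gt_atTop 1] with x hx
    simpa using log_le_digamma_add_one (x := x + -1) (by linarith)
  · filter_upwards [eventually_gt_atTop 0] with x hx
    simpa using digamma_le_log hx

theorem tendsto_digamma_add_sub_digamma_atTop (a : ℝ) :
    Tendsto (fun x => digamma (x + a) - digamma x) atTop (𝓝 0) := by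
  have h_shift := tendsto_digamma_sub_log_atTop.comp (tendsto_atTop_add_const_right _ a tendsto_id)
  have h := (h_shift.sub tendsto_digamma_sub_log_atTop).add (Real.tendsto_log_comp_add_sub_log a)
  simp only [sub_zero, add_zero] at h
  refine h.congr fun x => ?_
  simp only [Function.comp_apply, id]
  ring

theorem hasSum_digamma_sub_digamma (hx : 0 < x) (hy : 0 < y) :
    HasSum (fun k : ℕ => 1 / (y + k) - 1 / (x + k)) (digamma x - digamma y) := by
  wlog hyx : y ≤ x generalizing x y
  · simpa using (this hy hx (le_of_not_ge hyx)).neg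
  have h_nonneg (k : ℕ) : 0 ≤ 1 / (y + k) - 1 / (x + k) := by
    rw [sub_nonneg]
    gcongr
  rw [hasSum_iff_tendsto_nat_of_nonneg h_nonneg]
  have h_tail : Tendsto (fun n : ℕ => digamma (x + n) - digamma (y + n)) atTop (𝓝 0) := by
    refine ((tendsto_digamma_add_sub_digamma_atTop (x - y)).comp
      (tendsto_atTop_add_const_left _ y tendsto_natCast_atTop_atTop)).congr fun n => ?_
    simp only [Function.comp_apply]
    ring_nf
  have h := h_tail.const_sub (digamma x - digamma y)
  rw [sub_zero] at h
  refine h.congr fun n => ?_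
  rw [digamma_add_natCast hx, digamma_add_natCast hy, Finset.sum_sub_distrib]
  ring

theorem intervalIntegrable_rpow_mul_sub_one {c : ℝ} (hc : 0 < c) (hx : 0 < x) :
    IntervalIntegrable (fun t : ℝ => t ^ (c * x - 1)) volume 0 1 :=
  intervalIntegral.intervalIntegrable_rpow' (by linarith [mul_pos hc hx])

theorem integral_mul_rpow_mul_sub_one {c : ℝ} (hc : 0 < c) (hx : 0 < x) :
    ∫ t in (0 : ℝ)..1, c * t ^ (c * x - 1) = 1 / x := by
  have h := mul_pos hc hx
  rw [intervalIntegral.integral_const_mul, integral_rpow (.inl (by linarith)), sub_add_cancel,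
    Real.one_rpow, Real.zero_rpow h.ne', sub_zero, mul_one_div, div_mul_cancel_left₀ hc.ne',
    one_div]

theorem hasSum_rpow_mul_add_natCast_sub_one {c t : ℝ} (hc : 0 < c) (ht : t ∈ Ioo 0 1) (x : ℝ) :
    HasSum (fun k : ℕ => c * t ^ (c * (x + k) - 1)) (c * t ^ (c * x - 1) / (1 - t ^ c)) := by
  have h_geom := (hasSum_geometric_of_lt_one (Real.rpow_nonneg ht.1.le c)
    (Real.rpow_lt_one ht.1.le ht.2 hc)).mul_left (c * t ^ (c * x - 1))
  rw [← div_eq_mul_inv] at h_geom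
  refine h_geom.congr_fun fun k => ?_
  rw [mul_assoc, ← Real.rpow_mul_natCast ht.1.le, ← Real.rpow_add ht.1]
  ring_nf

-- The scale `c` is the substitution `t ↦ t ^ c` in Gauss's integral: for `x` with denominator `c`
-- it makes all exponents integers.
theorem digamma_sub_digamma_eq_integral {c : ℝ} (hc : 0 < c) (hx : 0 < x) (hy : 0 < y) :
    digamma x - digamma y
      = ∫ t in (0 : ℝ)..1, (c * t ^ (c * y - 1) - c * t ^ (c * x - 1)) / (1 - t ^ c) := by
  wlog hyx : y ≤ x generalizing x y
  · rw [← neg_sub, this hy hx (le_of_not_ge hyx), ← intervalIntegral.integral_neg]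
    congr! 2 with t
    ring
  let F (k : ℕ) (t : ℝ) : ℝ := c * t ^ (c * (y + k) - 1) - c * t ^ (c * (x + k) - 1)
  have h_integrable {z : ℝ} (hz : 0 < z) (k : ℕ) :
      IntervalIntegrable (fun t : ℝ => c * t ^ (c * (z + k) - 1)) volume 0 1 :=
    (intervalIntegrable_rpow_mul_sub_one hc (by positivity)).const_mul c
  have hF_integrable (k : ℕ) : IntegrableOn (F k) (Ioc 0 1) :=
    ((h_integrable hy k).sub (h_integrable hx k)).1
  have hF_integral (k : ℕ) : ∫ t in Ioc 0 1, F k t = 1 / (y + k) - 1 / (x + k) := by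
    rw [← intervalIntegral.integral_of_le zero_le_one,
      intervalIntegral.integral_sub (h_integrable hy k) (h_integrable hx k),
      integral_mul_rpow_mul_sub_one hc (by positivity),
      integral_mul_rpow_mul_sub_one hc (by positivity)]
  have hF_norm (k : ℕ) : ∫ t in Ioc 0 1, ‖F k t‖ = ∫ t in Ioc 0 1, F k t := by
    refine setIntegral_congr_fun measurableSet_Ioc fun t ht => Real.norm_of_nonneg ?_
    refine sub_nonneg.2 (mul_le_mul_of_nonneg_left ?_ hc.le)
    exact Real.rpow_le_rpow_of_exponent_ge ht.1 ht.2 (by gcongr)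
  have h_sum := hasSum_digamma_sub_digamma hx hy
  have h_swap := hasSum_integral_of_summable_integral_norm hF_integrable
    (h_sum.summable.congr fun k => by rw [hF_norm, hF_integral])
  simp only [hF_integral] at h_swap
  rw [h_sum.unique h_swap, ← intervalIntegral.integral_of_le zero_le_one]
  refine intervalIntegral.integral_congr_Ioo_of_le zero_le_one fun t ht => ?_
  simp only [sub_div]
  exact ((hasSum_rpow_mul_add_natCast_sub_one hc ht y).sub
    (hasSum_rpow_mul_add_natCast_sub_one hc ht x)).tsum_eq

theorem digamma_one_sub_sub_digamma (hx : ∀ n : ℤ, x ≠ n) :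
    digamma (1 - x) - digamma x = π * Real.cot (π * x) := by
  have h_ne (n : ℕ) : x ≠ -n := by exact_mod_cast hx (-n)
  have h_ne' (n : ℕ) : 1 - x ≠ -n := fun h => hx (n + 1) (by push_cast; linarith)
  have h_sin : Real.sin (π * x) ≠ 0 := Real.sin_ne_zero_iff.2 fun n h =>
    hx n (mul_right_cancel₀ Real.pi_ne_zero (by linarith))
  have h_left : logDeriv (fun s => Real.Gamma s * Real.Gamma (1 - s)) x
      = digamma x - digamma (1 - x) := by
    have h_diff := Real.differentiableAt_Gamma h_ne'
    rw [logDeriv_mul (g := fun s => Real.Gamma (1 - s)) x (Real.Gamma_ne_zero h_ne)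
      (Real.Gamma_ne_zero h_ne') (Real.differentiableAt_Gamma h_ne)
      (differentiableAt_comp_const_sub.2 h_diff), logDeriv_apply, logDeriv_apply,
      deriv_comp_const_sub, neg_div, ← sub_eq_add_neg, digamma, digamma]
  have h_right : logDeriv (fun s => π / Real.sin (π * s)) x = -(π * Real.cot (π * x)) := by
    have h := logDeriv_comp (f := Real.sin) (g := (π * ·)) (x := x) (by fun_prop) (by fun_prop)
    rw [Real.logDeriv_sin, deriv_const_mul_id'] at h
    rw [logDeriv_div (g := fun s => Real.sin (π * s)) x Real.pi_ne_zero h_sin (by fun_prop)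
      (by fun_prop), logDeriv_const, Pi.zero_apply, zero_sub, mul_comm π]
    exact congrArg Neg.neg h
  rw [funext Real.Gamma_mul_Gamma_one_sub, h_right] at h_left
  linarith

end Digamma

section RootsOfUnity

variable {K : Type*} [Field K] {ζ : K} {q r : ℕ}

theorem sum_inv_pow_mul_pow_of_isPrimitiveRoot (hζ : IsPrimitiveRoot ζ q) {j : ℕ} (hr : r < q)
    (hj : j < q) :
    ∑ k ∈ range q, (ζ ^ k)⁻¹ ^ r * (ζ ^ k) ^ j = if j = r then (q : K) else 0 := by
  have hζ0 : ζ ≠ 0 := hζ.ne_zero (by omega)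
  have h_pow (k : ℕ) : (ζ ^ k)⁻¹ ^ r * (ζ ^ k) ^ j = (ζ ^ j / ζ ^ r) ^ k := by
    field_simp
    ring
  simp only [h_pow]
  split_ifs with h
  · simp [h, hζ0]
  · have h_ne : ζ ^ j / ζ ^ r ≠ 1 := fun h_eq =>
      h (hζ.pow_inj hj hr ((div_eq_one_iff_eq (pow_ne_zero r hζ0)).1 h_eq))
    rw [geom_sum_eq h_ne, div_pow, pow_right_comm, pow_right_comm ζ r, hζ.pow_eq_one]
    simp

theorem sum_inv_pow_div_one_sub_pow_mul (hζ : IsPrimitiveRoot ζ q) (hr : r < q) {t : K}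
    (ht : t ^ q ≠ 1) :
    ∑ k ∈ range q, (ζ ^ k)⁻¹ ^ r / (1 - ζ ^ k * t) = q * t ^ r / (1 - t ^ q) := by
  have h_ne : 1 - t ^ q ≠ 0 := sub_ne_zero.2 ht.symm
  have h_geom (k : ℕ) :
      1 / (1 - ζ ^ k * t) = (∑ j ∈ range q, (ζ ^ k) ^ j * t ^ j) / (1 - t ^ q) := by
    have h : (1 - ζ ^ k * t) * ∑ j ∈ range q, (ζ ^ k) ^ j * t ^ j = 1 - t ^ q := by
      simp only [← mul_pow, mul_neg_geom_sum]
      rw [mul_pow, pow_right_comm, hζ.pow_eq_one, one_pow, one_mul]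
    rw [eq_div_iff h_ne, ← h, one_div_mul_eq_div, mul_div_cancel_left₀]
    exact left_ne_zero_of_mul (h ▸ h_ne)
  calc ∑ k ∈ range q, (ζ ^ k)⁻¹ ^ r / (1 - ζ ^ k * t)
      = ∑ k ∈ range q, ∑ j ∈ range q, (ζ ^ k)⁻¹ ^ r * (ζ ^ k) ^ j * t ^ j / (1 - t ^ q) := by
        refine Finset.sum_congr rfl fun k _ => ?_
        rw [div_eq_mul_one_div, h_geom, mul_div_assoc', Finset.mul_sum, Finset.sum_div]
        simp only [mul_assoc]
    _ = ∑ j ∈ range q, (if j = r then (q : K) else 0) * t ^ j / (1 - t ^ q) := by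
        rw [Finset.sum_comm]
        refine Finset.sum_congr rfl fun j hj => ?_
        rw [← Finset.sum_div, ← Finset.sum_mul,
          sum_inv_pow_mul_pow_of_isPrimitiveRoot hζ hr (Finset.mem_range.1 hj)]
    _ = q * t ^ r / (1 - t ^ q) := by
        simp [ite_mul, ite_div, hr]

end RootsOfUnity

section Gauss

theorem one_sub_mem_slitPlane_of_norm_le_one {z : ℂ} (hz : ‖z‖ ≤ 1) (hz1 : z ≠ 1) :
    1 - z ∈ Complex.slitPlane := by
  refine .inl (sub_pos.2 (lt_of_le_of_ne ((Complex.re_le_norm z).trans hz) fun h => hz1 ?_))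
  have h_im : z.im = 0 := Complex.abs_re_eq_norm.1
    ((Complex.abs_re_le_norm z).antisymm (hz.trans (by simp [h])))
  exact Complex.ext h h_im

theorem intervalIntegrable_div_one_sub_mul {z : ℂ} (hz : 1 - z ∈ Complex.slitPlane) :
    IntervalIntegrable (fun t : ℝ => z / (1 - z * t)) volume 0 1 := by
  rw [sub_eq_add_neg] at hz
  have h := (Complex.continuousOn_one_add_mul_inv hz).const_mul z
  refine ContinuousOn.intervalIntegrable ?_
  simpa [div_eq_mul_inv, sub_eq_add_neg, mul_comm] using h

theorem integral_div_one_sub_mul {z : ℂ} (hz : 1 - z ∈ Complex.slitPlane) :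
    ∫ t : ℝ in (0 : ℝ)..1, z / (1 - z * t) = -Complex.log (1 - z) := by
  rw [← Complex.log_inv _ (Complex.slitPlane_arg_ne_pi hz), Complex.log_inv_eq_integral hz,
    ← intervalIntegral.integral_const_mul]
  simp only [div_eq_mul_inv, Complex.real_smul, mul_comm]

variable {p q : ℕ}

theorem sum_one_sub_inv_pow_mul_div_one_sub_pow_mul {K : Type*} [Field K] {ζ t : K}
    (hζ : IsPrimitiveRoot ζ q) (hp : 0 < p) (hpq : p ≤ q) (ht : t ^ q ≠ 1) :
    ∑ k ∈ Finset.Ico 1 q, (1 - (ζ ^ k)⁻¹ ^ p) * (ζ ^ k / (1 - ζ ^ k * t))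
      = (q * t ^ (q - 1) - q * t ^ (p - 1)) / (1 - t ^ q) := by
  have hζ0 : ζ ≠ 0 := hζ.ne_zero (by omega)
  have h_coeff {m : ℕ} (hm : 0 < m) (k : ℕ) : (ζ ^ k)⁻¹ ^ (m - 1) = (ζ ^ k)⁻¹ ^ m * ζ ^ k := by
    rw [← pow_sub_one_mul hm.ne' (ζ ^ k)⁻¹, inv_mul_cancel_right₀ (pow_ne_zero k hζ0)]
  have h_period (k : ℕ) : (ζ ^ k)⁻¹ ^ q = 1 := by
    rw [inv_pow, pow_right_comm, hζ.pow_eq_one, one_pow, inv_one]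
  rw [sub_div, ← sum_inv_pow_div_one_sub_pow_mul hζ (by omega) ht,
    ← sum_inv_pow_div_one_sub_pow_mul hζ (by omega) ht, ← Finset.sum_sub_distrib,
    Finset.range_eq_Ico, Finset.sum_eq_sum_Ico_succ_bot (hp.trans_le hpq)]
  simp only [pow_zero, inv_one, one_pow, sub_self, zero_add]
  refine Finset.sum_congr rfl fun k _ => ?_
  rw [h_coeff hp, h_coeff (hp.trans_le hpq), h_period]
  ring

theorem digamma_natCast_div_natCast_eq_integral (hp : 0 < p) (hq : 0 < q) :
    digamma (p / q) = -Real.eulerMascheroniConstant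
      + ∫ t in (0 : ℝ)..1, (q * t ^ (q - 1) - q * t ^ (p - 1)) / (1 - t ^ q) := by
  have h_exponent {m : ℕ} (hm : 0 < m) (t : ℝ) : t ^ (q * (m / q : ℝ) - 1) = t ^ (m - 1) := by
    rw [mul_div_cancel₀ _ (by positivity), ← Nat.cast_pred hm, Real.rpow_natCast]
  have h := digamma_sub_digamma_eq_integral (c := q) (x := p / q) (y := q / q)
    (by positivity) (by positivity) (by positivity)
  simp only [h_exponent hp, h_exponent hq, Real.rpow_natCast] at h
  rw [← h, div_self (by positivity : (q : ℝ) ≠ 0), digamma_one]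
  ring

theorem digamma_natCast_div_natCast_eq_sum_log {ζ : ℂ} (hζ : IsPrimitiveRoot ζ q) (hp : 0 < p)
    (hpq : p ≤ q) :
    (digamma (p / q) : ℂ) = -Real.eulerMascheroniConstant
      + ∑ k ∈ Finset.Ico 1 q, ((ζ ^ k)⁻¹ ^ p - 1) * Complex.log (1 - ζ ^ k) := by
  have hq : 0 < q := hp.trans_le hpq
  have h_slit {k : ℕ} (hk : k ∈ Finset.Ico 1 q) : 1 - ζ ^ k ∈ Complex.slitPlane := by
    obtain ⟨hk1, hkq⟩ := Finset.mem_Ico.1 hk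
    refine one_sub_mem_slitPlane_of_norm_le_one ?_ (hζ.pow_ne_one_of_pos_of_lt (by omega) hkq)
    rw [norm_pow, hζ.norm'_eq_one hq.ne', one_pow]
  rw [digamma_natCast_div_natCast_eq_integral hp hq, Complex.ofReal_add, Complex.ofReal_neg,
    ← intervalIntegral.integral_ofReal]
  congr 1
  calc ∫ t : ℝ in (0 : ℝ)..1, (((q * t ^ (q - 1) - q * t ^ (p - 1)) / (1 - t ^ q) : ℝ) : ℂ)
      = ∫ t : ℝ in (0 : ℝ)..1,
          ∑ k ∈ Finset.Ico 1 q, (1 - (ζ ^ k)⁻¹ ^ p) * (ζ ^ k / (1 - ζ ^ k * t)) := by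
        refine intervalIntegral.integral_congr_Ioo_of_le zero_le_one fun t ht => ?_
        have ht1 : (t : ℂ) ^ q ≠ 1 := by
          exact_mod_cast (pow_lt_one₀ ht.1.le ht.2 hq.ne').ne
        simp only [sum_one_sub_inv_pow_mul_div_one_sub_pow_mul hζ hp hpq ht1]
        push_cast
        rfl
    _ = ∑ k ∈ Finset.Ico 1 q, (1 - (ζ ^ k)⁻¹ ^ p) * -Complex.log (1 - ζ ^ k) := by
        rw [intervalIntegral.integral_finsetSum fun k hk =>
          (intervalIntegrable_div_one_sub_mul (h_slit hk)).const_mul _]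
        refine Finset.sum_congr rfl fun k hk => ?_
        rw [intervalIntegral.integral_const_mul, integral_div_one_sub_mul (h_slit hk)]
    _ = ∑ k ∈ Finset.Ico 1 q, ((ζ ^ k)⁻¹ ^ p - 1) * Complex.log (1 - ζ ^ k) := by
        refine Finset.sum_congr rfl fun k _ => ?_
        ring

theorem exp_two_pi_mul_I_div_pow (k q : ℕ) :
    Complex.exp (2 * π * Complex.I / q) ^ k = Complex.exp ((2 * π * k / q : ℝ) * Complex.I) := by
  rw [← Complex.exp_nat_mul]
  push_cast
  ring_nf

theorem norm_one_sub_exp_two_pi_mul_I_div_pow {k : ℕ} (hkq : k ≤ q) :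
    ‖1 - Complex.exp (2 * π * Complex.I / q) ^ k‖ = 2 * Real.sin (π * k / q) := by
  have h_le : (k / q : ℝ) ≤ 1 := div_le_one_of_le₀ (by exact_mod_cast hkq) (by positivity)
  have h_sin : 0 ≤ Real.sin (π * k / q) := by
    refine Real.sin_nonneg_of_nonneg_of_le_pi (by positivity) ?_
    rw [mul_div_assoc]
    exact mul_le_of_le_one_right Real.pi_pos.le h_le
  rw [exp_two_pi_mul_I_div_pow, norm_sub_rev, mul_comm, Complex.norm_exp_I_mul_ofReal_sub_one,
    show 2 * π * k / q / 2 = π * k / q by ring, Real.norm_of_nonneg (by positivity)]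

theorem inv_pow_add_inv_pow_sub_exp_two_pi_mul_I_div (k : ℕ) (hpq : p ≤ q) (hq : q ≠ 0) :
    (Complex.exp (2 * π * Complex.I / q) ^ k)⁻¹ ^ p
        + (Complex.exp (2 * π * Complex.I / q) ^ k)⁻¹ ^ (q - p)
      = (2 * Real.cos (2 * π * k * p / q) : ℝ) := by
  have h_period : (Complex.exp (2 * π * Complex.I / q) ^ k) ^ q = 1 := by
    rw [pow_right_comm, (Complex.isPrimitiveRoot_exp q hq).pow_eq_one, one_pow]
  rw [pow_sub₀ _ (inv_ne_zero (pow_ne_zero k (Complex.exp_ne_zero _))) hpq, inv_pow _ q, h_period,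
    inv_one, one_mul, inv_pow, inv_inv, ← pow_mul, exp_two_pi_mul_I_div_pow, ← Complex.exp_neg,
    Complex.ofReal_mul, Complex.ofReal_cos, Complex.ofReal_ofNat, Complex.two_cos]
  push_cast
  ring_nf

theorem sum_log_two_mul_sin_pi_mul_div (hq : 0 < q) :
    ∑ k ∈ Finset.Ico 1 q, Real.log (2 * Real.sin (π * k / q)) = Real.log q := by
  obtain ⟨n, rfl⟩ := Nat.exists_eq_succ_of_ne_zero hq.ne'
  have hζ := Complex.isPrimitiveRoot_exp (n + 1) (by omega)
  have h_norm {k : ℕ} (hk : k ∈ Finset.Ico 1 (n + 1)) :=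
    norm_one_sub_exp_two_pi_mul_I_div_pow (Finset.mem_Ico.1 hk).2.le
  rw [← Finset.sum_congr rfl fun k hk => congrArg Real.log (h_norm hk), ← Real.log_prod,
    ← norm_prod, Finset.prod_Ico_eq_prod_range]
  · simp only [add_tsub_cancel_right, add_comm 1, hζ.prod_one_sub_pow_eq_order]
    norm_cast
  · intro k hk
    obtain ⟨hk1, hkq⟩ := Finset.mem_Ico.1 hk
    exact norm_ne_zero_iff.2 (sub_ne_zero.2 (hζ.pow_ne_one_of_pos_of_lt (by omega) hkq).symm)

theorem digamma_add_digamma_one_sub (hp : 0 < p) (hpq : p < q) :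
    digamma (p / q) + digamma (1 - p / q) = -2 * Real.eulerMascheroniConstant - 2 * Real.log q
      + 2 * ∑ k ∈ Finset.Ico 1 q,
          Real.cos (2 * π * k * p / q) * Real.log (2 * Real.sin (π * k / q)) := by
  have hq : 0 < q := hp.trans hpq
  set ζ := Complex.exp (2 * π * Complex.I / q)
  have hζ : IsPrimitiveRoot ζ q := Complex.isPrimitiveRoot_exp q hq.ne'
  have h_reflect : (digamma (1 - p / q) : ℂ) = -Real.eulerMascheroniConstant
      + ∑ k ∈ Finset.Ico 1 q, ((ζ ^ k)⁻¹ ^ (q - p) - 1) * Complex.log (1 - ζ ^ k) := by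
    rw [← digamma_natCast_div_natCast_eq_sum_log hζ (by omega) (by omega), Nat.cast_sub hpq.le,
      sub_div, div_self (by positivity)]
  have h_complex : ((digamma (p / q) + digamma (1 - p / q) : ℝ) : ℂ)
      = (-2 * Real.eulerMascheroniConstant : ℝ)
        + ∑ k ∈ Finset.Ico 1 q,
            (2 * Real.cos (2 * π * k * p / q) - 2 : ℝ) * Complex.log (1 - ζ ^ k) := by
    rw [Complex.ofReal_add, h_reflect, digamma_natCast_div_natCast_eq_sum_log hζ hp hpq.le,
      add_add_add_comm, ← Finset.sum_add_distrib]
    congr 1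
    · push_cast
      ring
    · refine Finset.sum_congr rfl fun k _ => ?_
      rw [Complex.ofReal_sub,
        ← inv_pow_add_inv_pow_sub_exp_two_pi_mul_I_div k hpq.le hq.ne']
      push_cast
      ring
  have h_real := congrArg Complex.re h_complex
  rw [Complex.add_re, Complex.re_sum, Complex.ofReal_re, Complex.ofReal_re] at h_real
  rw [h_real, sub_add, sub_eq_add_neg _ (2 * Real.log q - _), ← sum_log_two_mul_sin_pi_mul_div hq,
    ← mul_sub, ← Finset.sum_sub_distrib, neg_mul_eq_mul_neg, ← Finset.sum_neg_distrib,
    Finset.mul_sum]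
  congr 1
  refine Finset.sum_congr rfl fun k hk => ?_
  rw [Complex.re_ofReal_mul, Complex.log_re,
    norm_one_sub_exp_two_pi_mul_I_div_pow (Finset.mem_Ico.1 hk).2.le]
  ring

theorem digamma_natCast_div_natCast (hp : 0 < p) (hpq : p < q) :
    digamma (p / q) = -Real.eulerMascheroniConstant - Real.log q - π / 2 * Real.cot (π * (p / q))
      + ∑ k ∈ Finset.Ico 1 q,
          Real.cos (2 * π * k * p / q) * Real.log (2 * Real.sin (π * k / q)) := by
  have h_even := digamma_add_digamma_one_sub hp hpq
  have h_odd : digamma (1 - p / q) - digamma (p / q) = π * Real.cot (π * (p / q)) := by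
    refine digamma_one_sub_sub_digamma fun n hn => ?_
    have hq : (0 : ℝ) < q := by exact_mod_cast hp.trans hpq
    have h_pos : 0 < (p / q : ℝ) := by positivity
    have h_lt : (p / q : ℝ) < 1 := (div_lt_one hq).2 (by exact_mod_cast hpq)
    rw [hn] at h_pos h_lt
    norm_cast at h_pos h_lt
    omega
  linarith

end Gauss

section GoldenRatio

theorem goldenRatio_add_inv : φ + φ⁻¹ = √5 := by
  rw [Real.inv_goldenRatio, ← sub_eq_add_neg, Real.goldenRatio_sub_goldenConj]

theorem goldenRatio_sub_inv : φ - φ⁻¹ = 1 := by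
  rw [Real.inv_goldenRatio, sub_neg_eq_add, Real.goldenRatio_add_goldenConj]

theorem log_two_add_sqrt_five : Real.log (2 + √5) = 3 * Real.log φ := by
  have h_cube : φ ^ 3 = 2 + √5 := by
    have h : √5 = 2 * φ - 1 := by
      rw [Real.goldenRatio]
      ring
    linear_combination (φ + 1) * Real.goldenRatio_sq - h
  rw [← h_cube, Real.log_pow, Nat.cast_ofNat]

theorem cos_pi_div_five_eq_goldenRatio_div_two : Real.cos (π / 5) = φ / 2 := by
  rw [Real.cos_pi_div_five, Real.goldenRatio]
  ring

theorem cos_two_pi_div_five : Real.cos (2 * π / 5) = φ⁻¹ / 2 := by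
  rw [mul_div_assoc, Real.cos_two_mul, cos_pi_div_five_eq_goldenRatio_div_two]
  linear_combination Real.goldenRatio_sq / 2 + goldenRatio_sub_inv / 2

theorem sin_pi_div_five_pos : 0 < Real.sin (π / 5) :=
  Real.sin_pos_of_pos_of_lt_pi (by positivity) (by linarith [Real.pi_pos])

theorem two_mul_sin_pi_div_five_sq : (2 * Real.sin (π / 5)) ^ 2 = √5 * φ⁻¹ := by
  have h_inv : φ * φ⁻¹ = 1 := mul_inv_cancel₀ Real.goldenRatio_ne_zero
  rw [mul_pow, Real.sin_sq, cos_pi_div_five_eq_goldenRatio_div_two, ← goldenRatio_add_inv]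
  linear_combination -Real.goldenRatio_sq - 2 * h_inv + (φ⁻¹ - 1) * goldenRatio_sub_inv

theorem log_two_mul_sin_pi_div_five :
    Real.log (2 * Real.sin (π / 5)) = (Real.log √5 - Real.log φ) / 2 := by
  have h := congrArg Real.log two_mul_sin_pi_div_five_sq
  rw [Real.log_pow, Real.log_mul (by positivity) (inv_ne_zero Real.goldenRatio_ne_zero),
    Real.log_inv, Nat.cast_ofNat] at h
  linarith

theorem log_two_mul_sin_two_pi_div_five :
    Real.log (2 * Real.sin (2 * π / 5)) = (Real.log √5 + Real.log φ) / 2 := by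
  have h_double : 2 * Real.sin (2 * π / 5) = 2 * Real.sin (π / 5) * φ := by
    rw [mul_div_assoc, Real.sin_two_mul, cos_pi_div_five_eq_goldenRatio_div_two]
    ring
  rw [h_double, Real.log_mul (by linarith [sin_pi_div_five_pos]) Real.goldenRatio_ne_zero,
    log_two_mul_sin_pi_div_five]
  ring

theorem log_two_mul_sin_pi_div_ten : Real.log (2 * Real.sin (π / 10)) = -Real.log φ := by
  rw [← Real.cos_pi_div_two_sub, show π / 2 - π / 10 = 2 * π / 5 by ring, cos_two_pi_div_five,
    mul_div_cancel₀ _ two_ne_zero, Real.log_inv]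

theorem log_two_mul_sin_three_pi_div_ten : Real.log (2 * Real.sin (3 * π / 10)) = Real.log φ := by
  rw [← Real.cos_pi_div_two_sub, show π / 2 - 3 * π / 10 = π / 5 by ring,
    cos_pi_div_five_eq_goldenRatio_div_two, mul_div_cancel₀ _ two_ne_zero]

theorem cot_three_pi_div_ten : Real.cot (3 * π / 10) = √(10 - 2 * √5) / (1 + √5) := by
  have h_sin : √(10 - 2 * √5) = 4 * Real.sin (π / 5) := by
    rw [← Real.sqrt_sq (mul_pos four_pos sin_pi_div_five_pos).le, mul_pow, Real.sin_sq,
      Real.cos_pi_div_five]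
    congr 1
    linear_combination Real.sq_sqrt (show (0 : ℝ) ≤ 5 by norm_num)
  have h_compl : 3 * π / 10 = π / 2 - π / 5 := by ring
  rw [h_compl, Real.cot_eq_cos_div_sin, Real.cos_pi_div_two_sub, Real.sin_pi_div_two_sub,
    Real.cos_pi_div_five, h_sin, div_div_eq_mul_div, mul_comm]

end GoldenRatio

section TrigSums

theorem sum_Ico_one_two_mul_of_symm {M : Type*} [AddCommMonoid M] {f : ℕ → M} {n : ℕ}
    (hn : 0 < n) (hf : ∀ k ≤ 2 * n, f (2 * n - k) = f k) :
    ∑ k ∈ Finset.Ico 1 (2 * n), f k = 2 • ∑ k ∈ Finset.Ico 1 n, f k + f n := by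
  have h_reflect : ∑ k ∈ Finset.Ico (n + 1) (2 * n), f k = ∑ k ∈ Finset.Ico 1 n, f k := by
    have h := Finset.sum_Ico_reflect f 1 (m := n) (n := 2 * n) (by omega)
    rw [show 2 * n + 1 - n = n + 1 by omega, Nat.add_sub_cancel] at h
    rw [← h]
    refine Finset.sum_congr rfl fun k hk => hf k ?_
    linarith [(Finset.mem_Ico.1 hk).2]
  rw [← Finset.sum_Ico_consecutive f (n := n) (by omega) (by omega),
    Finset.sum_eq_sum_Ico_succ_bot (a := n) (by omega), h_reflect, two_nsmul]
  abel

theorem sum_cos_mul_log_two_mul_sin_two_mul {n : ℕ} (p : ℕ) (hn : 0 < n) :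
    ∑ k ∈ Finset.Ico 1 (2 * n),
        Real.cos (2 * π * k * p / (2 * n)) * Real.log (2 * Real.sin (π * k / (2 * n)))
      = 2 * ∑ k ∈ Finset.Ico 1 n,
          Real.cos (π * k * p / n) * Real.log (2 * Real.sin (π * k / (2 * n)))
        + (-1) ^ p * Real.log 2 := by
  have h_angle (x : ℝ) : 2 * π * x * p / (2 * n) = π * x * p / n := by
    rw [mul_assoc 2, mul_assoc 2, mul_div_mul_left _ _ two_ne_zero]
  simp only [h_angle]
  rw [sum_Ico_one_two_mul_of_symm hn fun k hk => ?_]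
  · have h_cos : π * n * p / n = p * π := by
      field_simp
    have h_sin : π * n / (2 * n) = π / 2 := by
      field_simp
    rw [h_cos, h_sin, Real.cos_nat_mul_pi, Real.sin_pi_div_two, mul_one, nsmul_eq_mul,
      Nat.cast_ofNat]
  · have h_cos : π * (2 * n - k) * p / n = p * (2 * π) - π * k * p / n := by
      field_simp
    have h_sin : π * (2 * n - k) / (2 * n) = π - π * k / (2 * n) := by
      field_simp
    rw [Nat.cast_sub hk, Nat.cast_mul, Nat.cast_ofNat, h_cos, h_sin, Real.cos_nat_mul_two_pi_sub,
      Real.sin_pi_sub]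

theorem sum_cos_mul_log_two_mul_sin_three_tenths :
    ∑ k ∈ Finset.Ico (1 : ℕ) 10,
        Real.cos (2 * π * k * 3 / 10) * Real.log (2 * Real.sin (π * k / 10))
      = 1 / 2 * (√5 * Real.log (2 + √5) - Real.log √5) - Real.log 2 := by
  have h_cos1 : Real.cos (π * 3 / 5) = -(φ⁻¹ / 2) := by
    rw [← cos_two_pi_div_five, ← Real.cos_pi_sub]
    ring_nf
  have h_cos2 : Real.cos (π * 2 * 3 / 5) = -(φ / 2) := by
    rw [← cos_pi_div_five_eq_goldenRatio_div_two, ← Real.cos_add_pi]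
    ring_nf
  have h_cos3 : Real.cos (π * 3 * 3 / 5) = φ / 2 := by
    rw [← cos_pi_div_five_eq_goldenRatio_div_two, ← Real.cos_two_pi_sub]
    ring_nf
  have h_cos4 : Real.cos (π * 4 * 3 / 5) = φ⁻¹ / 2 := by
    rw [← cos_two_pi_div_five, ← Real.cos_add_two_pi (2 * π / 5)]
    ring_nf
  have h_arg2 : π * 2 / 10 = π / 5 := by ring
  have h_arg4 : π * 4 / 10 = 2 * π / 5 := by ring
  have h_fold := sum_cos_mul_log_two_mul_sin_two_mul (n := 5) 3 (by norm_num)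
  norm_num only [Nat.cast_ofNat] at h_fold
  rw [h_fold]
  simp only [Finset.sum_Ico_succ_top, Nat.one_le_ofNat, le_refl, Finset.Ico_self, Finset.sum_empty,
    zero_add, Nat.cast_one, Nat.cast_ofNat, mul_one]
  rw [h_cos1, h_cos2, h_cos3, h_cos4, log_two_mul_sin_pi_div_ten, h_arg2,
    log_two_mul_sin_pi_div_five, mul_comm π 3, log_two_mul_sin_three_pi_div_ten, h_arg4,
    log_two_mul_sin_two_pi_div_five, log_two_add_sqrt_five]
  linear_combination
    3 / 2 * Real.log φ * goldenRatio_add_inv - 1 / 2 * Real.log √5 * goldenRatio_sub_inv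

end TrigSums

theorem digamma_three_tenths :
    digamma (3 / 10) =
      -Real.eulerMascheroniConstant - Real.log 20
        - (Real.sqrt (10 - 2 * Real.sqrt 5) / (1 + Real.sqrt 5)) * (Real.pi / 2)
        + (1 / 2) * (Real.sqrt 5 * Real.log (2 + Real.sqrt 5) - Real.log (Real.sqrt 5)) := by
  have h_gauss := digamma_natCast_div_natCast (p := 3) (q := 10) (by norm_num) (by norm_num)
  have h_log : Real.log 20 = Real.log 10 + Real.log 2 := by
    rw [← Real.log_mul (by norm_num) (by norm_num)]
    norm_num
  push_cast at h_gauss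
  rw [h_gauss, sum_cos_mul_log_two_mul_sin_three_tenths, ← mul_div_assoc,
    mul_comm π, cot_three_pi_div_ten, h_log]
  ring
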